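/- Let K = C_{(13,2)}(4₁) be the (13,2)-cable of the figure-eight knot, with normalized colored Jones polynomial J_{K,n} defined via Habiro's formula and the cabling formula (with r = 13, s = 2). For every integer n ≥ 1, the function ℏ ↦ J_{K,n}(e^{ℏ}) (defined for small real ℏ ≠ 0 by the quotient J̃_{K,n}(e^{ℏ/4})/J̃_{U,n}(e^{ℏ/4}) and extended real-analytically across ℏ = 0) has Taylor expansion at ℏ = 0 equal to J_{K,n}(e^{ℏ}) = 1 + (17 − 17n²)ℏ² + (−156 + 156n²)ℏ³ + (24749/12 − 2365n² + (3631/12)n⁴)ℏ⁴ + (−31629 + 38662n² − 7033n⁴)ℏ⁵ + (203413517/360 − (8687953/12)n² + (1969367/12)n⁴ − (1855937/360)n⁶)ℏ⁶ + O(ℏ⁷). In particular, the coefficient of ℏ and every ℏ-coefficient up to order 6 is a polynomial in n of degree at most the order of ℏ. -/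

import Mathlib

/-- Habiro's formula for the normalized colored Jones polynomial of the figure-eight knot:
`J_{4₁,m}(q) = Σ_{k=0}^{|m|−1} Π_{j=1}^{k} (q^m + q^{−m} − q^j − q^{−j})`. -/
noncomputable def J41 (q : ℝ) (m : ℤ) : ℝ :=
  ∑ k ∈ Finset.range m.natAbs, ∏ j ∈ Finset.Icc 1 k,
    (q ^ m + q ^ (-m) - q ^ (j : ℤ) - q ^ (-(j : ℤ)))

/-- The unnormalized colored Jones polynomial of the figure-eight knot (with `t⁴ = q`):
`J̃_{4₁,m}(t) = ((t^{2m} − t^{−2m})/(t² − t^{−2})) · J_{4₁,m}(t⁴)`. -/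
noncomputable def Jtilde41 (t : ℝ) (m : ℤ) : ℝ :=
  (t ^ (2 * m) - t ^ (-(2 * m))) / (t ^ (2 : ℤ) - t ^ (-2 : ℤ)) * J41 (t ^ (4 : ℤ)) m

/-- The 0-framed unknot normalization `J̃_{U,n}(t) = (t^{2n} − t^{−2n})/(t² − t^{−2})`. -/
noncomputable def JtildeU (t : ℝ) (n : ℤ) : ℝ :=
  (t ^ (2 * n) - t ^ (-(2 * n))) / (t ^ (2 : ℤ) - t ^ (-2 : ℤ))

/-- The cabling formula for the unnormalized colored Jones polynomial of the
`(r,s)`-cable of the figure-eight knot: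
`J̃_{K,n}(t) = t^{−rs(n²−1)} Σ_w t^{4rw(sw+1)} J̃_{4₁,2sw+1}(t)`, where `w` runs over
`{−(n−1)/2, −(n−1)/2 + 1, …, (n−1)/2}`.  Writing `u = 2w = 2j − (n−1)` for `j = 0, …, n−1`,
the exponent is `4rw(sw+1) = rsu² + 2ru` and the color is `2sw + 1 = su + 1`. -/
noncomputable def JtildeCable (r s : ℤ) (t : ℝ) (n : ℤ) : ℝ :=
  t ^ (-(r * s * (n ^ 2 - 1))) *
    ∑ j ∈ Finset.range n.toNat,
      t ^ (r * s * (2 * (j : ℤ) - (n - 1)) ^ 2 + 2 * r * (2 * (j : ℤ) - (n - 1))) *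
        Jtilde41 t (s * (2 * (j : ℤ) - (n - 1)) + 1)

/-- The normalized colored Jones polynomial of the `(r,s)`-cable of the figure-eight knot,
evaluated at `q = e^ℏ` (that is, `t = e^{ℏ/4}`):
`J_{K,n}(e^ℏ) = J̃_{K,n}(e^{ℏ/4}) / J̃_{U,n}(e^{ℏ/4})`. -/
noncomputable def JCable (r s : ℤ) (n : ℤ) (h : ℝ) : ℝ :=
  JtildeCable r s (Real.exp (h / 4)) n / JtildeU (Real.exp (h / 4)) n

/-!
At `q = e^ℏ` each factor of Habiro's formula is `O(ℏ²)`, so modulo `ℏ⁸` only the products of at most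
three factors contribute and `J_{4₁,m}` has Taylor coefficients polynomial in `m`. For `s = 2` the
summand of the cabling formula changes sign under `u ↦ -1 - u`, which replaces the color
`m = 2u + 1` by `-m` and fixes the framing exponent. Hence the cable sums `A_n` satisfy
`A_{n+1} = F_n - A_n`, where `F_n` is the summand at `u = n`, and their expansion follows by
induction on `n` from a single polynomial identity between Taylor coefficients. Once the common
factor `t² - t⁻²` is cancelled, the denominator of `J_{K,n}` has a simple zero at `ℏ = 0`, where the
numerator vanishes as well, so dividing both by `ℏ` extends the quotient analytically.
-/

open PowerSeries Finset Asymptotics Filter Topology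
open scoped Nat

/-- `f` is analytic at `0` with Taylor series `p`. -/
structure HasTaylorSeries {𝕜 : Type*} [NontriviallyNormedField 𝕜] (f : 𝕜 → 𝕜) (p : 𝕜⟦X⟧) :
    Prop where
  analyticAt : AnalyticAt 𝕜 f 0
  iteratedDeriv_eq (n : ℕ) : iteratedDeriv n f 0 = n ! * coeff n p

namespace HasTaylorSeries

variable {𝕜 : Type*} [NontriviallyNormedField 𝕜] {f g : 𝕜 → 𝕜} {p q : 𝕜⟦X⟧}

theorem congr (hf : HasTaylorSeries f p) (h : f =ᶠ[𝓝 0] g) : HasTaylorSeries g p where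
  analyticAt := hf.analyticAt.congr h
  iteratedDeriv_eq n := by rw [← h.iteratedDeriv_eq, hf.iteratedDeriv_eq]

theorem unique [CharZero 𝕜] (hp : HasTaylorSeries f p) (hq : HasTaylorSeries f q) : p = q := by
  ext n
  refine mul_left_cancel₀ (Nat.cast_ne_zero.2 n.factorial_ne_zero : (n ! : 𝕜) ≠ 0) ?_
  rw [← hp.iteratedDeriv_eq, hq.iteratedDeriv_eq]

theorem exists_of_analyticAt [CharZero 𝕜] (hf : AnalyticAt 𝕜 f 0) : ∃ p, HasTaylorSeries f p :=
  ⟨.mk fun n ↦ iteratedDeriv n f 0 / n !, hf, fun n ↦ by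
    rw [coeff_mk, mul_div_cancel₀ _ (Nat.cast_ne_zero.2 n.factorial_ne_zero)]⟩

theorem apply_zero (hf : HasTaylorSeries f p) : f 0 = constantCoeff p := by
  simpa using hf.iteratedDeriv_eq 0

theorem const (c : 𝕜) : HasTaylorSeries (fun _ ↦ c) (C c) where
  analyticAt := analyticAt_const
  iteratedDeriv_eq n := by
    rcases n with _ | n <;> simp [iteratedDeriv_const, coeff_C]

theorem id : HasTaylorSeries (fun x : 𝕜 ↦ x) X where
  analyticAt := analyticAt_id
  iteratedDeriv_eq n := by
    rcases n with _ | _ | n <;> simp [iteratedDeriv_succ', coeff_X, iteratedDeriv_const]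

theorem add [CompleteSpace 𝕜] (hf : HasTaylorSeries f p) (hg : HasTaylorSeries g q) :
    HasTaylorSeries (fun x ↦ f x + g x) (p + q) where
  analyticAt := hf.analyticAt.fun_add hg.analyticAt
  iteratedDeriv_eq n := by
    rw [iteratedDeriv_fun_add hf.analyticAt.contDiffAt hg.analyticAt.contDiffAt,
      hf.iteratedDeriv_eq, hg.iteratedDeriv_eq, map_add, mul_add]

theorem mul [CompleteSpace 𝕜] (hf : HasTaylorSeries f p) (hg : HasTaylorSeries g q) :
    HasTaylorSeries (fun x ↦ f x * g x) (p * q) where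
  analyticAt := hf.analyticAt.fun_mul hg.analyticAt
  iteratedDeriv_eq n := by
    rw [iteratedDeriv_fun_mul hf.analyticAt.contDiffAt hg.analyticAt.contDiffAt, coeff_mul,
      Nat.sum_antidiagonal_eq_sum_range_succ_mk, mul_sum]
    refine sum_congr rfl fun i hi ↦ ?_
    rw [hf.iteratedDeriv_eq, hg.iteratedDeriv_eq,
      ← Nat.choose_mul_factorial_mul_factorial (mem_range_succ_iff.1 hi)]
    push_cast
    ring

theorem sub [CompleteSpace 𝕜] (hf : HasTaylorSeries f p) (hg : HasTaylorSeries g q) :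
    HasTaylorSeries (fun x ↦ f x - g x) (p - q) := by
  simpa [sub_eq_add_neg] using hf.add ((const (-1)).mul hg)

theorem sum [CompleteSpace 𝕜] {ι : Type*} {s : Finset ι} {F : ι → 𝕜 → 𝕜} {P : ι → 𝕜⟦X⟧}
    (h : ∀ i ∈ s, HasTaylorSeries (F i) (P i)) :
    HasTaylorSeries (fun x ↦ ∑ i ∈ s, F i x) (∑ i ∈ s, P i) := by
  classical
  induction s using Finset.induction_on with
  | empty => simpa using const (0 : 𝕜)
  | insert i s hi ih =>
    simp only [sum_insert hi]
    exact (h i (mem_insert_self i s)).add (ih fun j hj ↦ h j (mem_insert_of_mem hj))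

theorem prod [CompleteSpace 𝕜] {ι : Type*} {s : Finset ι} {F : ι → 𝕜 → 𝕜} {P : ι → 𝕜⟦X⟧}
    (h : ∀ i ∈ s, HasTaylorSeries (F i) (P i)) :
    HasTaylorSeries (fun x ↦ ∏ i ∈ s, F i x) (∏ i ∈ s, P i) := by
  classical
  induction s using Finset.induction_on with
  | empty => simpa using const (1 : 𝕜)
  | insert i s hi ih =>
    simp only [prod_insert hi]
    exact (h i (mem_insert_self i s)).mul (ih fun j hj ↦ h j (mem_insert_of_mem hj))

theorem polynomial [CompleteSpace 𝕜] (P : Polynomial 𝕜) : HasTaylorSeries (P.eval ·) P := by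
  induction P using Polynomial.induction_on' with
  | add P Q hP hQ => simpa using hP.add hQ
  | monomial n a =>
    simpa [← Polynomial.C_mul_X_pow_eq_monomial] using
      (const a).mul (prod (s := range n) fun _ _ ↦ id)

theorem eq_mul_dslope (hf : HasTaylorSeries f (X * p)) (x : 𝕜) : f x = x * dslope f 0 x := by
  have hf0 : f 0 = 0 := by simp [hf.apply_zero]
  simpa [hf0] using (sub_smul_dslope f 0 x).symm

theorem dslope [CompleteSpace 𝕜] [CharZero 𝕜] (hf : HasTaylorSeries f (X * p)) :
    HasTaylorSeries (dslope f 0) p := by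
  obtain ⟨F, hF⟩ := hf.analyticAt
  obtain ⟨q, hq⟩ := exists_of_analyticAt ⟨_, hF.has_fpower_series_dslope_fslope⟩
  have hXq : HasTaylorSeries f (X * q) :=
    (id.mul hq).congr (.of_forall fun x ↦ (hf.eq_mul_dslope x).symm)
  rwa [mul_left_cancel₀ X_ne_zero (hf.unique hXq)]

theorem isBigO_pow [CompleteSpace 𝕜] [CharZero 𝕜] {n : ℕ} (hf : HasTaylorSeries f p)
    (hp : X ^ n ∣ p) : f =O[𝓝 0] (· ^ n) := by
  induction n generalizing f p with
  | zero => simpa using hf.analyticAt.continuousAt.tendsto.isBigO_one 𝕜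
  | succ n ih =>
    obtain ⟨q, rfl⟩ := hp
    rw [pow_succ', mul_assoc] at hf
    have hmul := (isBigO_refl (fun x : 𝕜 ↦ x) (𝓝 0)).mul (ih hf.dslope (dvd_mul_right _ q))
    exact hmul.congr (fun x ↦ (hf.eq_mul_dslope x).symm) fun x ↦ (pow_succ' x n).symm

theorem isBigO_sub_sum_range [CompleteSpace 𝕜] [CharZero 𝕜] (hf : HasTaylorSeries f p) (n : ℕ) :
    (fun x ↦ f x - ∑ k ∈ range n, coeff k p * x ^ k) =O[𝓝 0] (· ^ n) := by
  have htrunc : X ^ n ∣ p - (trunc n p : 𝕜⟦X⟧) := by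
    rw [X_pow_dvd_iff]
    intro k hk
    simp [coeff_trunc, hk]
  simpa [Polynomial.eval, eval₂_trunc_eq_sum_range] using
    (hf.sub (polynomial (trunc n p))).isBigO_pow htrunc

theorem div [CompleteSpace 𝕜] [CharZero 𝕜] (hf : HasTaylorSeries f p)
    (hg : HasTaylorSeries g q) (hq : constantCoeff q ≠ 0) :
    HasTaylorSeries (fun x ↦ f x / g x) (p * q⁻¹) := by
  have hg0 : g 0 ≠ 0 := hg.apply_zero ▸ hq
  obtain ⟨r, hr⟩ := exists_of_analyticAt (hf.analyticAt.fun_div hg.analyticAt hg0)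
  have hrq : HasTaylorSeries f (r * q) := by
    refine (hr.mul hg).congr ?_
    filter_upwards [hg.analyticAt.continuousAt.eventually_ne hg0] with x hx
    exact div_mul_cancel₀ _ hx
  rwa [hf.unique hrq, mul_assoc, PowerSeries.mul_inv_cancel _ hq, mul_one]

theorem exists_div [CompleteSpace 𝕜] [CharZero 𝕜] (hf : HasTaylorSeries f (X * p))
    (hg : HasTaylorSeries g (X * q)) (hq : constantCoeff q ≠ 0) :
    ∃ k, HasTaylorSeries k (p * q⁻¹) ∧ ∀ᶠ x in 𝓝[≠] 0, k x = f x / g x := by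
  refine ⟨_, hf.dslope.div hg.dslope hq, ?_⟩
  filter_upwards [self_mem_nhdsWithin] with x hx
  rw [hf.eq_mul_dslope x, hg.eq_mul_dslope x, mul_div_mul_left _ _ hx]

end HasTaylorSeries

/-- The power series of `e^{cℏ}`. -/
noncomputable def scaledExp (c : ℝ) : ℝ⟦X⟧ := rescale c (PowerSeries.exp ℝ)

@[simp]
theorem coeff_scaledExp (c : ℝ) (n : ℕ) : coeff n (scaledExp c) = c ^ n / n ! := by
  simp [scaledExp, div_eq_mul_inv]

@[simp]
theorem constantCoeff_scaledExp (c : ℝ) : constantCoeff (scaledExp c) = 1 := by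
  simp [← coeff_zero_eq_constantCoeff_apply]

theorem scaledExp_mul_scaledExp (a b : ℝ) : scaledExp a * scaledExp b = scaledExp (a + b) :=
  exp_mul_exp_eq_exp_add a b

theorem scaledExp_zero : scaledExp 0 = 1 := by
  simp [scaledExp]

theorem hasTaylorSeries_exp_mul (c : ℝ) :
    HasTaylorSeries (fun h ↦ Real.exp (c * h)) (scaledExp c) where
  analyticAt := by fun_prop
  iteratedDeriv_eq n := by
    rw [coeff_scaledExp, mul_div_cancel₀ _ (Nat.cast_ne_zero.2 n.factorial_ne_zero),
      iteratedDeriv_exp_const_mul]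
    simp

theorem hasTaylorSeries_exp_div_zpow (c : ℝ) (m : ℤ) :
    HasTaylorSeries (fun h ↦ Real.exp (h / c) ^ m) (scaledExp (m / c)) := by
  simpa only [div_mul_comm (m : ℝ), Real.exp_mul, Real.rpow_intCast] using
    hasTaylorSeries_exp_mul (m / c)

/-- The power series of `2 sinh (xℏ/2) = e^{xℏ/2} - e^{-xℏ/2}`. -/
noncomputable def twoSinh (x : ℝ) : ℝ⟦X⟧ := scaledExp (x / 2) - scaledExp (-(x / 2))

theorem scaledExp_mul_twoSinh (a x : ℝ) :
    scaledExp a * twoSinh x = scaledExp (a + x / 2) - scaledExp (a - x / 2) := by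
  rw [twoSinh, mul_sub, scaledExp_mul_scaledExp, scaledExp_mul_scaledExp, ← sub_eq_add_neg]

theorem twoSinh_neg (x : ℝ) : twoSinh (-x) = -twoSinh x := by
  simp [twoSinh, neg_div]

theorem twoSinh_zero : twoSinh 0 = 0 := by
  simp [twoSinh]

theorem hasTaylorSeries_two_mul_sinh (x : ℝ) :
    HasTaylorSeries (fun h ↦ 2 * Real.sinh (x * h / 2)) (twoSinh x) := by
  refine ((hasTaylorSeries_exp_mul (x / 2)).sub
    (hasTaylorSeries_exp_mul (-(x / 2)))).congr (.of_forall fun h ↦ ?_)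
  simp only [Real.sinh_eq]
  ring_nf

theorem exists_twoSinh_eq_X_mul (x : ℝ) : ∃ q, twoSinh x = X * q ∧ constantCoeff q = x := by
  obtain ⟨q, hq⟩ : X ∣ twoSinh x := X_dvd_iff.2 (by simp [twoSinh])
  refine ⟨q, hq, ?_⟩
  rw [← coeff_zero_eq_constantCoeff_apply, ← coeff_succ_X_mul, ← hq]
  simp [twoSinh]

/-- The power series of the factor `q^m + q^{-m} - q^j - q^{-j}` of Habiro's formula at
`q = e^ℏ`. -/
noncomputable def habiroFactor (m j : ℝ) : ℝ⟦X⟧ :=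
  scaledExp m + scaledExp (-m) - scaledExp j - scaledExp (-j)

theorem habiroFactor_neg (m j : ℝ) : habiroFactor (-m) j = habiroFactor m j := by
  simp [habiroFactor, add_comm]

theorem habiroFactor_natAbs (m : ℤ) : habiroFactor m m.natAbs = 0 := by
  rcases Int.natAbs_eq m with h | h <;> rw [← Int.cast_natCast]
  · simp [habiroFactor, ← h]
  · simp [habiroFactor, show (m.natAbs : ℤ) = -m by lia]

theorem X_sq_dvd_habiroFactor (m j : ℝ) : X ^ 2 ∣ habiroFactor m j := by
  rw [X_pow_dvd_iff]
  intro k hk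
  interval_cases k <;> simp [habiroFactor]

theorem X_pow_dvd_prod_habiroFactor (m : ℝ) (k : ℕ) :
    X ^ (2 * k) ∣ ∏ j ∈ Icc 1 k, habiroFactor m j := by
  simpa [pow_mul] using
    prod_dvd_prod_of_dvd (fun _ ↦ X ^ 2) _ fun j (_ : j ∈ Icc 1 k) ↦ X_sq_dvd_habiroFactor m j

/-- The power series of the normalized colored Jones polynomial `J_{4₁,m}(e^ℏ)`. -/
noncomputable def figureEightSeries (m : ℤ) : ℝ⟦X⟧ :=
  ∑ k ∈ range m.natAbs, ∏ j ∈ Icc 1 k, habiroFactor m j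

theorem hasTaylorSeries_J41 (m : ℤ) :
    HasTaylorSeries (fun h ↦ J41 (Real.exp h) m) (figureEightSeries m) := by
  refine .sum fun k _ ↦ .prod fun j _ ↦ ?_
  have hpow := hasTaylorSeries_exp_div_zpow 1
  simpa [habiroFactor] using (((hpow m).add (hpow (-m))).sub (hpow j)).sub (hpow (-j))

theorem figureEightSeries_neg (m : ℤ) : figureEightSeries (-m) = figureEightSeries m := by
  simp [figureEightSeries, habiroFactor_neg]

/-- Habiro's sum breaks off at `|m|` by itself, so it may be continued to infinity; its `k`-th
term is divisible by `ℏ^{2k}`. -/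
theorem X_pow_dvd_figureEightSeries_sub_sum {m : ℤ} (hm : m ≠ 0) (N : ℕ) :
    X ^ (2 * N) ∣ figureEightSeries m - ∑ k ∈ range N, ∏ j ∈ Icc 1 k, habiroFactor m j := by
  have hvanish (k : ℕ) : ∏ j ∈ Icc 1 (m.natAbs + k), habiroFactor m j = 0 :=
    prod_eq_zero (mem_Icc.2 ⟨Int.natAbs_pos.2 hm, Nat.le_add_right _ k⟩) (habiroFactor_natAbs m)
  have hextend : figureEightSeries m =
      ∑ k ∈ range (m.natAbs + N), ∏ j ∈ Icc 1 k, habiroFactor m j := by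
    simp [sum_range_add, hvanish, figureEightSeries]
  rw [hextend, add_comm, sum_range_add, add_sub_cancel_left]
  refine dvd_sum fun k _ ↦ (pow_dvd_pow X ?_).trans (X_pow_dvd_prod_habiroFactor m (N + k))
  lia

/-- The Taylor coefficients of `J_{4₁,m}(e^ℏ)` up to order `7`, continued by zero. -/
noncomputable def figureEightCoeff (m : ℝ) : ℕ → ℝ
  | 0 => 1
  | 2 => m ^ 2 - 1
  | 4 => (m ^ 4 - 1) / 12 + (m ^ 2 - 1) * (m ^ 2 - 4)
  | 6 => (m ^ 6 - 1) / 360 + (m ^ 2 - 1) * (m ^ 4 - 16) / 12 + (m ^ 4 - 1) * (m ^ 2 - 4) / 12 +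
      (m ^ 2 - 1) * (m ^ 2 - 4) * (m ^ 2 - 9)
  | _ => 0

theorem X_pow_dvd_sum_prod_habiroFactor_sub (m : ℝ) :
    X ^ 8 ∣ ∑ k ∈ range 4, ∏ j ∈ Icc 1 k, habiroFactor m j -
      PowerSeries.mk (figureEightCoeff m) := by
  have hcoeff (j : ℝ) (k : ℕ) : coeff k (habiroFactor m j) =
      (m ^ k + (-m) ^ k - j ^ k - (-j) ^ k) / k ! := by
    simp only [habiroFactor, map_add, map_sub, coeff_scaledExp]
    ring
  rw [X_pow_dvd_iff]
  intro k hk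
  simp only [sum_range_succ, range_zero, sum_empty, prod_Icc_succ_top, Nat.reduceLeDiff,
    map_sub, map_add, PowerSeries.coeff_mk, coeff_mul,
    Nat.sum_antidiagonal_eq_sum_range_succ_mk, hcoeff]
  interval_cases k <;>
    simp [figureEightCoeff, sum_range_succ, Nat.factorial, coeff_one] <;> ring

theorem X_pow_dvd_figureEightSeries_sub {m : ℤ} (hm : m ≠ 0) :
    X ^ 8 ∣ figureEightSeries m - PowerSeries.mk (figureEightCoeff m) := by
  simpa using dvd_add (X_pow_dvd_figureEightSeries_sub_sum hm 4)
    (X_pow_dvd_sum_prod_habiroFactor_sub m)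

theorem exp_zpow_sub_exp_zpow_neg (h : ℝ) (k : ℤ) :
    Real.exp (h / 4) ^ (2 * k) - Real.exp (h / 4) ^ (-(2 * k)) = 2 * Real.sinh (k * h / 2) := by
  rw [← Real.rpow_intCast, ← Real.rpow_intCast, ← Real.exp_mul, ← Real.exp_mul, Real.sinh_eq]
  push_cast
  ring_nf

/-- The numerator of `J_{K,n}(e^ℏ)` for the `(r,s)`-cable `K` of `4₁`, as a function of `ℏ`, once
the common denominator `t² - t⁻²` of `J̃_{K,n}` and `J̃_{U,n}` has been cancelled. -/
noncomputable def cableNumerator (r s : ℤ) (n : ℕ) (h : ℝ) : ℝ :=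
  Real.exp (h / 4) ^ (-(r * s * ((n : ℤ) ^ 2 - 1))) *
    ∑ j ∈ range n, Real.exp (h / 4) ^ (r * s * (2 * (j : ℤ) - (n - 1)) ^ 2 +
      2 * r * (2 * (j : ℤ) - (n - 1))) *
        (2 * Real.sinh (((s * (2 * (j : ℤ) - (n - 1)) + 1 : ℤ) : ℝ) * h / 2) *
          J41 (Real.exp h) (s * (2 * (j : ℤ) - (n - 1)) + 1))

theorem JCable_eq_div (r s : ℤ) (n : ℕ) {h : ℝ} (hh : h ≠ 0) :
    JCable r s n h = cableNumerator r s n h / (2 * Real.sinh (n * h / 2)) := by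
  have hδ : Real.exp (h / 4) ^ (2 : ℤ) - Real.exp (h / 4) ^ (-2 : ℤ) ≠ 0 := by
    simpa using (exp_zpow_sub_exp_zpow_neg h 1).trans_ne (by simpa using hh)
  have hq : Real.exp (h / 4) ^ (4 : ℤ) = Real.exp h := by
    rw [← Real.rpow_intCast, ← Real.exp_mul]
    push_cast
    ring_nf
  have hnum : JtildeCable r s (Real.exp (h / 4)) n = cableNumerator r s n h /
      (Real.exp (h / 4) ^ (2 : ℤ) - Real.exp (h / 4) ^ (-2 : ℤ)) := by
    simp only [JtildeCable, Jtilde41, cableNumerator, hq, exp_zpow_sub_exp_zpow_neg,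
      Int.toNat_natCast, div_mul_eq_mul_div, ← mul_div_assoc, ← sum_div]
  have hden : JtildeU (Real.exp (h / 4)) n = 2 * Real.sinh (n * h / 2) /
      (Real.exp (h / 4) ^ (2 : ℤ) - Real.exp (h / 4) ^ (-2 : ℤ)) := by
    rw [JtildeU, exp_zpow_sub_exp_zpow_neg, Int.cast_natCast]
  rw [JCable, hnum, hden, div_div_div_cancel_right₀ hδ]

/-- The power series of the summand with index `w = u/2` of the cabling formula, multiplied by
`t² - t⁻²`, at `t = e^{ℏ/4}`. -/
noncomputable def cableSummand (r s u : ℤ) : ℝ⟦X⟧ :=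
  scaledExp ((r * s * u ^ 2 + 2 * r * u : ℤ) / 4) *
    (twoSinh (s * u + 1 : ℤ) * figureEightSeries (s * u + 1))

/-- The power series of the sum in the cabling formula, multiplied by `t² - t⁻²`, at
`t = e^{ℏ/4}`. -/
noncomputable def cableSum (r s : ℤ) (n : ℕ) : ℝ⟦X⟧ :=
  ∑ j ∈ range n, cableSummand r s (2 * j - (n - 1))

theorem hasTaylorSeries_cableNumerator (r s : ℤ) (n : ℕ) :
    HasTaylorSeries (cableNumerator r s n)
      (scaledExp ((-(r * s * ((n : ℤ) ^ 2 - 1)) : ℤ) / 4) * cableSum r s n) :=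
  (hasTaylorSeries_exp_div_zpow 4 _).mul <| .sum fun _ _ ↦
    (hasTaylorSeries_exp_div_zpow 4 _).mul <|
      (hasTaylorSeries_two_mul_sinh _).mul (hasTaylorSeries_J41 _)

theorem cableSummand_two_reflect (r u : ℤ) :
    cableSummand r 2 (-1 - u) = -cableSummand r 2 u := by
  have hcolor : 2 * (-1 - u) + 1 = -(2 * u + 1) := by ring
  have hexponent : r * 2 * (-1 - u) ^ 2 + 2 * r * (-1 - u) = r * 2 * u ^ 2 + 2 * r * u := by ring
  rw [cableSummand, hcolor, hexponent, Int.cast_neg, twoSinh_neg, figureEightSeries_neg, neg_mul,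
    mul_neg, cableSummand]

theorem cableSum_two_succ (r : ℤ) (n : ℕ) :
    cableSum r 2 (n + 1) = cableSummand r 2 n - cableSum r 2 n := by
  have hreflect : ∑ j ∈ range n, cableSummand r 2 (2 * j - n) = -cableSum r 2 n := by
    rw [cableSum, ← sum_neg_distrib, ← sum_range_reflect]
    refine sum_congr rfl fun j hj ↦ ?_
    rw [← cableSummand_two_reflect, Nat.sub_sub, Nat.cast_sub (by have := mem_range.1 hj; lia)]
    push_cast
    ring_nf
  rw [cableSum, sum_range_succ]
  push_cast
  rw [add_sub_cancel_right, hreflect]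
  ring_nf

/-- The Taylor coefficients of `J_{K,n}(e^ℏ)` for the `(r,2)`-cable `K` of `4₁` up to order `6`,
continued by zero. They are found by solving the recurrence in
`X_pow_dvd_cableCoeff_recurrence` for polynomials in `n`. -/
noncomputable def cableCoeff (r n : ℝ) : ℕ → ℝ
  | 0 => 1
  | 2 => (33 - r ^ 2) / 8 * (n ^ 2 - 1)
  | 3 => r * (r ^ 2 - 25) / 12 * (n ^ 2 - 1)
  | 4 => (n ^ 2 - 1) * ((5 * r ^ 4 - 198 * r ^ 2 + 6849) * n ^ 2 -
      (33 * r ^ 4 - 998 * r ^ 2 + 18117)) / 384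
  | 5 => r * (n ^ 2 - 1) * (3 * (49 * r ^ 4 - 1540 * r ^ 2 + 28611) -
      (33 * r ^ 4 - 1120 * r ^ 2 + 25807) * n ^ 2) / 1440
  | 6 => (n ^ 2 - 1) * ((3549153 - 102735 * r ^ 2 + 2475 * r ^ 4 - 61 * r ^ 6) * n ^ 4 +
      (-25922382 + 1615226 * r ^ 2 - 62810 * r ^ 4 + 1838 * r ^ 6) * n ^ 2 +
      (48939933 - 4678059 * r ^ 2 + 212335 * r ^ 4 - 6497 * r ^ 6)) / 46080
  | _ => 0

theorem X_pow_dvd_cableCoeff_recurrence (r n : ℝ) :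
    X ^ 8 ∣ twoSinh (2 * n + 1) * PowerSeries.mk (figureEightCoeff (2 * n + 1)) -
      (scaledExp (-(r * (n + 1) / 2)) * twoSinh n * PowerSeries.mk (cableCoeff r n) +
        scaledExp (r * n / 2) * twoSinh (n + 1) * PowerSeries.mk (cableCoeff r (n + 1))) := by
  rw [X_pow_dvd_iff]
  intro k hk
  rw [scaledExp_mul_twoSinh, scaledExp_mul_twoSinh, twoSinh]
  simp only [map_sub, map_add, coeff_mul, Nat.sum_antidiagonal_eq_sum_range_succ_mk,
    coeff_scaledExp, PowerSeries.coeff_mk]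
  interval_cases k <;>
    simp [figureEightCoeff, cableCoeff, sum_range_succ, Nat.factorial] <;> ring

theorem X_pow_dvd_cableSum_two_sub (r : ℤ) (n : ℕ) :
    X ^ 8 ∣ cableSum r 2 n - scaledExp (r * (n ^ 2 - 1) / 2) * twoSinh n *
      PowerSeries.mk (cableCoeff r n) := by
  induction n with
  | zero => simp [cableSum, twoSinh_zero]
  | succ n ih =>
    have hsummand : X ^ 8 ∣ cableSummand r 2 n - scaledExp (r * (n ^ 2 + n) / 2) *
        (twoSinh (2 * n + 1) * PowerSeries.mk (figureEightCoeff (2 * n + 1))) := by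
      have hcolor := (X_pow_dvd_figureEightSeries_sub (m := 2 * n + 1) (by lia)).mul_left
        (scaledExp (r * (n ^ 2 + n) / 2) * twoSinh (2 * n + 1))
      convert hcolor using 1
      simp only [cableSummand]
      push_cast
      ring_nf
    have hframing : scaledExp (r * (n ^ 2 - 1) / 2) =
        scaledExp (r * (n ^ 2 + n) / 2) * scaledExp (-(r * (n + 1) / 2)) := by
      rw [scaledExp_mul_scaledExp]
      ring_nf
    have hframing_succ : scaledExp (r * (((n + 1 : ℕ) : ℝ) ^ 2 - 1) / 2) =
        scaledExp (r * (n ^ 2 + n) / 2) * scaledExp (r * n / 2) := by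
      rw [scaledExp_mul_scaledExp]
      push_cast
      ring_nf
    have hkey := (X_pow_dvd_cableCoeff_recurrence r n).mul_left (scaledExp (r * (n ^ 2 + n) / 2))
    convert (hsummand.sub ih).add hkey using 1
    rw [cableSum_two_succ, hframing_succ, hframing]
    push_cast
    ring

theorem exists_hasTaylorSeries_JCable_two (r : ℤ) {n : ℕ} (hn : n ≠ 0) :
    ∃ g p, HasTaylorSeries g p ∧ (∀ᶠ h in 𝓝[≠] 0, g h = JCable r 2 n h) ∧
      X ^ 7 ∣ p - PowerSeries.mk (cableCoeff r n) := by
  obtain ⟨q, hq, hq0⟩ := exists_twoSinh_eq_X_mul n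
  have hq_ne : constantCoeff q ≠ 0 := by simpa [hq0] using hn
  obtain ⟨c, hc⟩ := (X_pow_dvd_cableSum_two_sub r n).mul_left (scaledExp (-(r * (n ^ 2 - 1) / 2)))
  have hnum : scaledExp (-(r * (n ^ 2 - 1) / 2)) * cableSum r 2 n =
      X * (q * PowerSeries.mk (cableCoeff r n) + X ^ 7 * c) := by
    rw [mul_sub, ← mul_assoc, ← mul_assoc, scaledExp_mul_scaledExp, neg_add_cancel, scaledExp_zero,
      one_mul, hq] at hc
    linear_combination hc
  have hnumerator : HasTaylorSeries (cableNumerator r 2 n)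
      (X * (q * PowerSeries.mk (cableCoeff r n) + X ^ 7 * c)) := by
    rw [← hnum]
    convert hasTaylorSeries_cableNumerator r 2 n using 3
    push_cast
    ring
  obtain ⟨g, hg, hg_eq⟩ :=
    hnumerator.exists_div (hq ▸ hasTaylorSeries_two_mul_sinh n) hq_ne
  refine ⟨g, _, hg, ?_, c * q⁻¹, ?_⟩
  · filter_upwards [hg_eq, self_mem_nhdsWithin] with h hgh hh
    rw [hgh, JCable_eq_div r 2 n hh]
  · linear_combination PowerSeries.mk (cableCoeff r n) * PowerSeries.mul_inv_cancel q hq_ne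

theorem hbar_expansion_cable_13_2_general (r n : ℤ) (hn : 1 ≤ n) :
    ∃ g : ℝ → ℝ, AnalyticAt ℝ g 0 ∧ (∀ᶠ h in 𝓝[≠] 0, g h = JCable r 2 n h) ∧
      (fun h ↦ g h - ∑ k ∈ range 7, cableCoeff r n k * h ^ k) =O[𝓝 0] (· ^ 7) := by
  lift n to ℕ using by lia
  obtain ⟨g, p, hg, hg_eq, hp⟩ := exists_hasTaylorSeries_JCable_two r (n := n) (by lia)
  refine ⟨g, hg.analyticAt, hg_eq, (hg.isBigO_sub_sum_range 7).congr_left fun h ↦ ?_⟩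
  congr 1
  refine sum_congr rfl fun k hk ↦ ?_
  have hcoeff := X_pow_dvd_iff.1 hp k (mem_range.1 hk)
  rw [map_sub, PowerSeries.coeff_mk, sub_eq_zero] at hcoeff
  rw [hcoeff, Int.cast_natCast]

/-- For `K = C_{(13,2)}(4₁)` and every integer `n ≥ 1`, the function `ℏ ↦ J_{K,n}(e^ℏ)`
(defined for small `ℏ ≠ 0` by the quotient `J̃_{K,n}(e^{ℏ/4})/J̃_{U,n}(e^{ℏ/4})` and extended
real-analytically across `ℏ = 0`) has Taylor expansion at `ℏ = 0` given by
`1 + (17 − 17n²)ℏ² + (−156 + 156n²)ℏ³ + (24749/12 − 2365n² + (3631/12)n⁴)ℏ⁴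
 + (−31629 + 38662n² − 7033n⁴)ℏ⁵
 + (203413517/360 − (8687953/12)n² + (1969367/12)n⁴ − (1855937/360)n⁶)ℏ⁶ + O(ℏ⁷)`. -/
theorem hbar_expansion_cable_13_2 (n : ℤ) (hn : 1 ≤ n) :
    ∃ g : ℝ → ℝ, AnalyticAt ℝ g 0 ∧
      (∀ᶠ h in nhdsWithin (0 : ℝ) {0}ᶜ, g h = JCable 13 2 n h) ∧
      (fun h : ℝ => g h -
        (1 + (17 - 17 * (n : ℝ) ^ 2) * h ^ 2 + (-156 + 156 * (n : ℝ) ^ 2) * h ^ 3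
          + (24749 / 12 - 2365 * (n : ℝ) ^ 2 + 3631 / 12 * (n : ℝ) ^ 4) * h ^ 4
          + (-31629 + 38662 * (n : ℝ) ^ 2 - 7033 * (n : ℝ) ^ 4) * h ^ 5
          + (203413517 / 360 - 8687953 / 12 * (n : ℝ) ^ 2 + 1969367 / 12 * (n : ℝ) ^ 4
            - 1855937 / 360 * (n : ℝ) ^ 6) * h ^ 6))
        =O[nhds (0 : ℝ)] (fun h => h ^ 7) := by
  convert hbar_expansion_cable_13_2_general 13 n hn using 6
  simp only [sum_range_succ, sum_range_zero, cableCoeff, Int.cast_ofNat]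
  ring
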